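/- arXiv:2102.04014 — 2 statements merged into one kernel-verified Lean document; each statement's English description precedes it below -/
import Mathlib

section
/- The reverse of the inequality d_CD ≤ 2K·d_EMD fails, and the Chamfer discrepancy does not separate distinct point clouds: for any two distinct points a ≠ b in a Euclidean space E, the size-3 point clouds P = (a, a, b) and Q = (a, b, b) satisfy d_CD(P, Q) = 0 while d_EMD(P, Q) ≥ ‖a − b‖ > 0. Consequently there is no constant c ≥ 0 with d_EMD(P, Q) ≤ c · d_CD(P, Q) for all equal-size point clouds P, Q. -/
open scoped BigOperators

/-- Chamfer discrepancy between two point clouds. -/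
noncomputable def dCD {E : Type*} [NormedAddCommGroup E] {n m : ℕ}
    (P : Fin n → E) (Q : Fin m → E) : ℝ :=
  (1 / (n : ℝ)) * ∑ i, ⨅ j, ‖P i - Q j‖ ^ 2 +
  (1 / (m : ℝ)) * ∑ j, ⨅ i, ‖P i - Q j‖ ^ 2

/-- Earth Mover's distance between two equal-size point clouds. -/
noncomputable def dEMD {E : Type*} [NormedAddCommGroup E] {n : ℕ}
    (P Q : Fin n → E) : ℝ :=
  ⨅ σ : Equiv.Perm (Fin n), ∑ i, ‖P i - Q (σ i)‖

/-!
The Chamfer discrepancy compares each point only with its nearest neighbour in the other cloud, so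
it vanishes as soon as `P` and `Q` have the same range, whatever the multiplicities. The Earth
Mover's distance sees multiplicities: every matching satisfies
`∑ i, (P i - Q (σ i)) = ∑ i, P i - ∑ i, Q i`, so by the triangle inequality its cost is at least
`‖∑ i, P i - ∑ i, Q i‖`. The clouds `(a, a, b)` and `(a, b, b)` have the same range, and their sums
differ by `a - b`.
-/

open Set

section

variable {E : Type*} [NormedAddCommGroup E]

theorem iInf_norm_sub_sq_eq_zero_of_mem_range {ι : Type*} {Q : ι → E} {x : E}
    (hx : x ∈ range Q) : ⨅ j, ‖x - Q j‖ ^ 2 = 0 := by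
  obtain ⟨j₀, rfl⟩ := hx
  have nonneg (j : ι) : 0 ≤ ‖Q j₀ - Q j‖ ^ 2 := sq_nonneg _
  refine le_antisymm ?_ (Real.iInf_nonneg nonneg)
  calc ⨅ j, ‖Q j₀ - Q j‖ ^ 2 ≤ ‖Q j₀ - Q j₀‖ ^ 2 := ciInf_le ⟨0, forall_mem_range.2 nonneg⟩ j₀
    _ = 0 := by simp

/-- In the body of `dCD` the scope of the first `⨅` extends over the second summand, which is
constant there and can be pulled out. -/
theorem dCD_eq_add {n m : ℕ} (P : Fin n → E) (Q : Fin m → E) :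
    dCD P Q = (1 / (n : ℝ)) * (∑ i, ⨅ j, ‖P i - Q j‖ ^ 2) +
      (1 / (m : ℝ)) * ∑ j, ⨅ i, ‖P i - Q j‖ ^ 2 := by
  unfold dCD
  rcases n.eq_zero_or_pos with rfl | hn
  · simp
  rcases m.eq_zero_or_pos with rfl | hm
  · simp
  have : Nonempty (Fin m) := ⟨⟨0, hm⟩⟩
  have pull_out (i : Fin n) (s : ℝ) :
      ⨅ j, (‖P i - Q j‖ ^ 2 + s) = (⨅ j, ‖P i - Q j‖ ^ 2) + s :=
    (ciInf_add (finite_range _).bddBelow s).symm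
  simp only [pull_out, Finset.sum_add_distrib, Finset.sum_const, Finset.card_univ,
    Fintype.card_fin, nsmul_eq_mul]
  field_simp

theorem dCD_eq_zero_of_range_eq {n m : ℕ} {P : Fin n → E} {Q : Fin m → E}
    (h : range P = range Q) : dCD P Q = 0 := by
  have left (i : Fin n) : ⨅ j, ‖P i - Q j‖ ^ 2 = 0 :=
    iInf_norm_sub_sq_eq_zero_of_mem_range (h ▸ mem_range_self i)
  have right (j : Fin m) : ⨅ i, ‖P i - Q j‖ ^ 2 = 0 := by
    simp_rw [norm_sub_rev _ (Q j)]
    exact iInf_norm_sub_sq_eq_zero_of_mem_range (h ▸ mem_range_self j)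
  simp [dCD_eq_add, left, right]

theorem norm_sum_sub_sum_le_dEMD {n : ℕ} (P Q : Fin n → E) :
    ‖∑ i, P i - ∑ i, Q i‖ ≤ dEMD P Q :=
  le_ciInf fun σ =>
    calc ‖∑ i, P i - ∑ i, Q i‖ = ‖∑ i, (P i - Q (σ i))‖ := by
          rw [Finset.sum_sub_distrib, Equiv.sum_comp σ Q]
      _ ≤ ∑ i, ‖P i - Q (σ i)‖ := norm_sum_le _ _

theorem chamfer_does_not_dominate_emd_general (a b : E) (hab : a ≠ b) :
    dCD ![a, a, b] ![a, b, b] = 0 ∧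
    ‖a - b‖ ≤ dEMD ![a, a, b] ![a, b, b] ∧
    0 < ‖a - b‖ ∧
    ¬ ∃ c : ℝ, ∀ P Q : Fin 3 → E, dEMD P Q ≤ c * dCD P Q := by
  have chamfer_zero : dCD ![a, a, b] ![a, b, b] = 0 :=
    dCD_eq_zero_of_range_eq (by simp)
  have le_emd : ‖a - b‖ ≤ dEMD ![a, a, b] ![a, b, b] := by
    simpa [Fin.sum_univ_three] using norm_sum_sub_sum_le_dEMD ![a, a, b] ![a, b, b]
  have norm_pos : 0 < ‖a - b‖ := norm_sub_pos_iff.2 hab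
  refine ⟨chamfer_zero, le_emd, norm_pos, fun ⟨c, hc⟩ => ?_⟩
  have emd_nonpos : dEMD ![a, a, b] ![a, b, b] ≤ 0 := by
    simpa only [chamfer_zero, mul_zero] using hc ![a, a, b] ![a, b, b]
  exact (norm_pos.trans_le le_emd).not_ge emd_nonpos

end

theorem chamfer_does_not_dominate_emd
    {E : Type*} [NormedAddCommGroup E] [InnerProductSpace ℝ E]
    (a b : E) (hab : a ≠ b) :
    dCD ![a, a, b] ![a, b, b] = 0 ∧
    ‖a - b‖ ≤ dEMD ![a, a, b] ![a, b, b] ∧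
    0 < ‖a - b‖ ∧
    ¬ ∃ c : ℝ, 0 ≤ c ∧ ∀ (n : ℕ) (P Q : Fin n → E), dEMD P Q ≤ c * dCD P Q := by
  obtain ⟨chamfer_zero, le_emd, norm_pos, unbounded⟩ :=
    chamfer_does_not_dominate_emd_general a b hab
  exact ⟨chamfer_zero, le_emd, norm_pos, fun ⟨c, _, hc⟩ => unbounded ⟨c, hc 3⟩⟩
end

section
/- Corollary of Lemma 1 for the max-form Chamfer discrepancy: let P, Q : Fin n → E be equal-size point clouds in a Euclidean space E with ‖u − v‖ ≤ K for all points u, v drawn from the ranges of P and Q. Then d_MCD(P, Q) ≤ 2 K · d_EMD(P, Q). -/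
open scoped BigOperators

/-- Chamfer discrepancy (max form) between two equal-size point clouds. -/
noncomputable def dMCD {E : Type*} [NormedAddCommGroup E] {n : ℕ}
    (P Q : Fin n → E) : ℝ :=
  max ((1 / (n : ℝ)) * ∑ i, ⨅ j, ‖P i - Q j‖ ^ 2)
      ((1 / (n : ℝ)) * ∑ j, ⨅ i, ‖P i - Q j‖ ^ 2)

/-! A matching `σ` sends `P i` to a point at least as far away as its nearest neighbour in `Q`, and
the squared distance to that point is at most `K` times the distance itself. Summing over `i` for an
optimal `σ` bounds one Chamfer average by `K / n` times the Earth Mover's distance; the inverse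
matching bounds the other. -/

theorem sum_iInf_norm_sub_sq_le_mul_sum {E ι κ : Type*} [SeminormedAddGroup E] [Fintype ι]
    {P : ι → E} {Q : κ → E} {K : ℝ} (f : ι → κ) (hK : ∀ i, ‖P i - Q (f i)‖ ≤ K) :
    ∑ i, ⨅ j, ‖P i - Q j‖ ^ 2 ≤ K * ∑ i, ‖P i - Q (f i)‖ := by
  rw [Finset.mul_sum]
  refine Finset.sum_le_sum fun i _ => ?_
  have h_bdd : BddBelow (Set.range fun j => ‖P i - Q j‖ ^ 2) :=
    ⟨0, Set.forall_mem_range.2 fun _ => sq_nonneg _⟩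
  calc
    ⨅ j, ‖P i - Q j‖ ^ 2 ≤ ‖P i - Q (f i)‖ ^ 2 := ciInf_le h_bdd (f i)
    _ = ‖P i - Q (f i)‖ * ‖P i - Q (f i)‖ := sq _
    _ ≤ K * ‖P i - Q (f i)‖ := mul_le_mul_of_nonneg_right (hK i) (norm_nonneg _)

section PointCloud

variable {E : Type*} [NormedAddCommGroup E] {n : ℕ} {P Q : Fin n → E} {K : ℝ}

theorem dEMD_nonneg (P Q : Fin n → E) : 0 ≤ dEMD P Q :=
  Real.iInf_nonneg fun _ => Finset.sum_nonneg fun _ _ => norm_nonneg _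

theorem dEMD_comm (P Q : Fin n → E) : dEMD P Q = dEMD Q P :=
  (Equiv.inv (Equiv.Perm (Fin n))).iInf_congr fun σ => by
    rw [← Equiv.sum_comp σ]
    simp [norm_sub_rev]

theorem exists_perm_sum_norm_sub_eq_dEMD (P Q : Fin n → E) :
    ∃ σ : Equiv.Perm (Fin n), ∑ i, ‖P i - Q (σ i)‖ = dEMD P Q :=
  exists_eq_ciInf_of_finite

theorem sum_iInf_norm_sub_sq_le_mul_dEMD (hK : ∀ i j, ‖P i - Q j‖ ≤ K) :
    ∑ i, ⨅ j, ‖P i - Q j‖ ^ 2 ≤ K * dEMD P Q := by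
  obtain ⟨σ, hσ⟩ := exists_perm_sum_norm_sub_eq_dEMD P Q
  rw [← hσ]
  exact sum_iInf_norm_sub_sq_le_mul_sum σ fun i => hK i (σ i)

theorem mcd_le_two_K_mul_emd_general (hK : ∀ i j, ‖P i - Q j‖ ≤ K) :
    dMCD P Q ≤ K / n * dEMD P Q := by
  have hPQ : ∑ i, ⨅ j, ‖P i - Q j‖ ^ 2 ≤ K * dEMD P Q := sum_iInf_norm_sub_sq_le_mul_dEMD hK
  have hQP : ∑ j, ⨅ i, ‖P i - Q j‖ ^ 2 ≤ K * dEMD P Q := by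
    rw [dEMD_comm]
    simp only [norm_sub_rev (P _)] at hK ⊢
    exact sum_iInf_norm_sub_sq_le_mul_dEMD fun j i => hK i j
  have h_average {S : ℝ} (hS : S ≤ K * dEMD P Q) : 1 / (n : ℝ) * S ≤ K / n * dEMD P Q :=
    calc
      1 / (n : ℝ) * S ≤ 1 / n * (K * dEMD P Q) := by gcongr
      _ = K / n * dEMD P Q := by ring
  exact max_le (h_average hPQ) (h_average hQP)

end PointCloud

/-- Corollary of Lemma 1 for the max-form Chamfer discrepancy. -/
theorem mcd_le_two_K_mul_emd
    {E : Type*} [NormedAddCommGroup E] [InnerProductSpace ℝ E]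
    {n : ℕ} (hn : 1 ≤ n) (P Q : Fin n → E) (K : ℝ)
    (hK : ∀ u ∈ Set.range P ∪ Set.range Q, ∀ v ∈ Set.range P ∪ Set.range Q,
      ‖u - v‖ ≤ K) :
    dMCD P Q ≤ 2 * K * dEMD P Q := by
  have hPQ (i j : Fin n) : ‖P i - Q j‖ ≤ K := hK _ (.inl ⟨i, rfl⟩) _ (.inr ⟨j, rfl⟩)
  have hK₀ : 0 ≤ K := (norm_nonneg _).trans (hPQ ⟨0, hn⟩ ⟨0, hn⟩)
  have hKn : K / n ≤ 2 * K :=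
    (div_le_self hK₀ (Nat.one_le_cast.2 hn)).trans (le_mul_of_one_le_left hK₀ one_le_two)
  exact (mcd_le_two_K_mul_emd_general hPQ).trans
    (mul_le_mul_of_nonneg_right hKn (dEMD_nonneg P Q))
end
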